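/- (Unbiasedness of the CG-DSGLD estimator.) Let S, d, m be positive integers, f : Fin S → ℝ with f s > 0 and ∑_s f s = 1, for each s let N_s be a positive integer and v_{s,1}, …, v_{s,N_s} ∈ ℝ^d, and let u_1, …, u_S ∈ ℝ^d. Then ∑_{s=1}^{S} f s · (1/N_s^m) ∑_{φ : Fin m → Fin N_s} [ (N_s/(f s · m)) ∑_{j=1}^{m} v_{s, φ(j)} + ∑_{s'=1}^{S} u_{s'} − (1/(f s)) u_s ] = ∑_{s=1}^{S} ∑_{i=1}^{N_s} v_{s,i}. That is, adding the conducive gradient g_s = ∑_{s'} u_{s'} − (1/(f s)) u_s to the DSGLD mini-batch estimator yields an unbiased estimator of the full-data gradient. -/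

import Mathlib

/-- Unbiasedness of the CG-DSGLD estimator: adding the conducive gradient
`g_s = ∑_{s'} u_{s'} - (1 / f s) • u s` to the DSGLD mini-batch estimator yields an
unbiased estimator of the full-data gradient. -/
theorem cgdsgld_unbiased (S d m : ℕ) (hS : 0 < S) (hd : 0 < d) (hm : 0 < m)
    (f : Fin S → ℝ) (hf : ∀ s, 0 < f s) (hsum : ∑ s, f s = 1)
    (N : Fin S → ℕ) (hN : ∀ s, 0 < N s)
    (v : (s : Fin S) → Fin (N s) → EuclideanSpace ℝ (Fin d))
    (u : Fin S → EuclideanSpace ℝ (Fin d)) :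
    ∑ s, f s • ((1 / (N s : ℝ) ^ m) •
        ∑ φ : Fin m → Fin (N s),
          (((N s : ℝ) / (f s * m)) • ∑ j, v s (φ j))
            + (∑ s', u s') - (1 / f s) • u s)
      = ∑ s, ∑ i, v s i := by
  have key : ∀ s, f s • ((1 / (N s : ℝ) ^ m) •
        ∑ φ : Fin m → Fin (N s),
          (((N s : ℝ) / (f s * m)) • ∑ j, v s (φ j))
            + (∑ s', u s') - (1 / f s) • u s)
      = ∑ i, v s i + (f s • (∑ s', u s') - u s) := by
    intro s
    have hfs : f s ≠ 0 := (hf s).ne'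
    have hNs : (N s : ℝ) ≠ 0 := by exact_mod_cast (hN s).ne'
    have hms : (m : ℝ) ≠ 0 := by exact_mod_cast hm.ne'
    have h1 : ∑ φ : Fin m → Fin (N s), ∑ j, v s (φ j)
        = ((m : ℝ) * (N s : ℝ) ^ (m - 1)) • ∑ i, v s i := by
      rw [Finset.sum_comm]
      have h2 : ∀ j : Fin m, ∑ φ : Fin m → Fin (N s), v s (φ j)
          = ((N s : ℝ) ^ (m - 1)) • ∑ i, v s i := by
        intro j
        have h3 := Fintype.sum_piFinset_apply (v s) Finset.univ j
        simp only [Fintype.piFinset_univ, Finset.card_univ, Fintype.card_fin] at h3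
        rw [h3, ← Nat.cast_smul_eq_nsmul ℝ]
        push_cast
        rfl
      rw [Finset.sum_congr rfl (fun j _ => h2 j), Finset.sum_const, Finset.card_univ,
        Fintype.card_fin, ← Nat.cast_smul_eq_nsmul ℝ, smul_smul]
    have hp : (N s : ℝ) ^ m = (N s : ℝ) ^ (m - 1) * N s := by
      rw [← pow_succ, Nat.sub_add_cancel hm]
    have hc : f s * (1 / (N s : ℝ) ^ m * ((N s : ℝ) / (f s * m) *
        ((m : ℝ) * (N s : ℝ) ^ (m - 1)))) = 1 := by
      rw [hp]
      field_simp
    have hc' : f s * (1 / f s) = 1 := by field_simp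
    rw [← Finset.smul_sum, h1, smul_sub, smul_add, smul_smul, smul_smul, smul_smul, smul_smul,
      hc', one_smul, add_sub_assoc]
    congr 1
    rw [show ∀ a b : ℝ, a = b → a • (∑ i, v s i) = b • ∑ i, v s i from
      fun a b h => by rw [h]]
    · exact one_smul ℝ _
    · refine Eq.trans ?_ hc
      ring
  rw [Finset.sum_congr rfl (fun s _ => key s), Finset.sum_add_distrib, Finset.sum_sub_distrib,
    ← Finset.sum_smul, hsum, one_smul, sub_self, add_zero]
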